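/- arXiv:1401.3268 — 5 statements merged into one kernel-verified Lean document; each statement's English description precedes it below -/
import Mathlib

section
/- Let n ≥ 1, let A_n = {x : Fin (n+1) → ℤ | ∑_i x i = 0}, and let L be an additive subgroup of A_n of rank n (equivalently, of finite index in A_n). Then there exists an adjacency matrix A : Matrix (Fin (n+1)) (Fin (n+1)) ℕ with zero diagonal of a strongly connected directed multigraph, with Laplacian Q = D − A, and a strictly positive vector Σ : Fin (n+1) → ℤ with Matrix.vecMul Σ Q = 0, Σ 0 = 1, and gcd of the entries of Σ equal to 1, such that the ℤ-span of the rows of Q equals L. -/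
open Matrix

/-- The Laplacian `Q = D - A` of the directed multigraph with adjacency matrix `A`. -/
def lap {n : ℕ} (A : Matrix (Fin (n+1)) (Fin (n+1)) ℕ) :
    Matrix (Fin (n+1)) (Fin (n+1)) ℤ :=
  Matrix.diagonal (fun i => ∑ j, (A i j : ℤ)) - A.map (fun a => (a : ℤ))

/-- Strong connectivity of a directed multigraph given by its adjacency matrix. -/
def StronglyConnected {n : ℕ} (A : Matrix (Fin (n+1)) (Fin (n+1)) ℕ) : Prop :=
  ∀ i j : Fin (n+1), i ≠ j → Relation.TransGen (fun a b => 0 < A a b) i j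

/-! Finite index gives `d > 0` with `d • x ∈ L` for every `x` in the root lattice. Hence, for each
`i`, among the vectors of `L` vanishing before `i` we can take one whose entry at `i` is negative
and generates the ideal of all such entries, and make its entries beyond `i + 1` nonpositive by
subtracting multiples of `d • (e_j - e_{i+1})`. These vectors `q_i` are a basis of `L` in echelon
form, and they are the Laplacian rows of the vertices `1, …, n` of a digraph with an edge from each
`i + 1` to `i`.

The row of vertex `0` must be `-∑ c_i q_i` with all `c_i > 0` and all entries off the diagonal
nonpositive. Now `q_i` is a positive multiple of `e_{i+1} - e_i` minus a nonnegative combination of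
the `e_j - e_{i+1}` with `j > i + 1`, so descending induction on `i` puts every `e_j - e_i` with
`i < j` into the rational cone of the rows. Clearing denominators in `∑ (e_j - e_0)` gives
nonnegative `c_i` for which column `j + 1` of `∑ c_i q_i` is positive; as `q_j` is the only row with
a positive entry there, `c_j > 0`. -/

section Lattice

variable {M : Type*} [AddCommGroup M]

lemma exists_pos_smul_mem_of_finrank_eq [Module.Free ℤ M] [Module.Finite ℤ M]
    {L N : Submodule ℤ M} (hLN : L ≤ N) (h : Module.finrank ℤ L = Module.finrank ℤ N) :
    ∃ d : ℤ, 0 < d ∧ ∀ x ∈ N, d • x ∈ L := by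
  have hfin : Finite (N ⧸ L.submoduleOf N) :=
    Submodule.finiteQuotientOfFreeOfRankEq _
      ((Submodule.submoduleOfEquivOfLe hLN).finrank_eq.trans h)
  refine ⟨Nat.card (N ⧸ L.submoduleOf N), by exact_mod_cast Nat.card_pos, fun x hx => ?_⟩
  have hmem := AddSubgroup.nsmul_index_mem (L.submoduleOf N).toAddSubgroup ⟨x, hx⟩
  rw [natCast_zsmul]
  exact hmem

lemma exists_neg_forall_dvd {N : Submodule ℤ M} (f : M →ₗ[ℤ] ℤ) (hf : ∃ x ∈ N, f x ≠ 0) :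
    ∃ h ∈ N, f h < 0 ∧ ∀ x ∈ N, f h ∣ f x := by
  obtain ⟨h, hN, hgen⟩ := Submodule.IsPrincipal.generator_mem (N.map f)
  have hdvd : ∀ x ∈ N, f h ∣ f x := fun x hx => by
    rw [hgen, ← Submodule.IsPrincipal.mem_iff_generator_dvd]
    exact Submodule.mem_map_of_mem hx
  have hne : f h ≠ 0 := fun h0 => by
    obtain ⟨x, hx, hfx⟩ := hf
    exact hfx (zero_dvd_iff.mp (h0 ▸ hdvd x hx))
  rcases hne.lt_or_gt with hneg | hpos
  · exact ⟨h, hN, hneg, hdvd⟩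
  · exact ⟨-h, N.neg_mem hN, by simpa using hpos, fun x hx => by simpa using hdvd x hx⟩

lemma zsmul_mem_of_nonneg {S : AddSubmonoid M} {x : M} (hx : x ∈ S) {a : ℤ} (ha : 0 ≤ a) :
    a • x ∈ S := by
  lift a to ℕ using ha
  rw [natCast_zsmul]
  exact S.nsmul_mem hx a

end Lattice

section DivisionClosure

variable {M : Type*} [AddCommMonoid M]

/-- The submonoid of elements some positive multiple of which lies in `S`; for `S` generated by
vectors of a lattice, these are the lattice points of the rational cone they span. -/
def divisionClosure (S : AddSubmonoid M) : AddSubmonoid M where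
  carrier := {x | ∃ d : ℕ, 0 < d ∧ d • x ∈ S}
  zero_mem' := ⟨1, one_pos, by simp⟩
  add_mem' := by
    rintro x y ⟨d, hd, hx⟩ ⟨e, he, hy⟩
    refine ⟨d * e, Nat.mul_pos hd he, ?_⟩
    rw [smul_add, mul_smul d e y, mul_comm, mul_smul]
    exact S.add_mem (S.nsmul_mem hx e) (S.nsmul_mem hy d)

lemma mem_divisionClosure {S : AddSubmonoid M} {x : M} :
    x ∈ divisionClosure S ↔ ∃ d : ℕ, 0 < d ∧ d • x ∈ S :=
  Iff.rfl

lemma le_divisionClosure (S : AddSubmonoid M) : S ≤ divisionClosure S :=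
  fun x hx => ⟨1, one_pos, by simpa using hx⟩

lemma mem_divisionClosure_of_nsmul_mem {S : AddSubmonoid M} {x : M} {k : ℕ} (hk : 0 < k)
    (hx : k • x ∈ divisionClosure S) : x ∈ divisionClosure S := by
  obtain ⟨d, hd, hmem⟩ := hx
  exact ⟨d * k, Nat.mul_pos hd hk, by rwa [mul_smul]⟩

end DivisionClosure

section RootLattice

variable {ι : Type*}

/-- The root `e_i - e_j` of type `A`; the value is `0` for `i = j`. For `i > j` these roots are
shown to lie in the rational cone of suitable Laplacian rows. -/
def rootA [DecidableEq ι] (i j : ι) : ι → ℤ :=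
  Pi.single i 1 - Pi.single j 1

lemma rootA_apply [DecidableEq ι] (i j k : ι) :
    rootA i j k = (if k = i then 1 else 0) - if k = j then 1 else 0 := by
  simp [rootA, Pi.single_apply]

lemma rootA_self [DecidableEq ι] (i : ι) : rootA i i = 0 :=
  sub_self _

lemma neg_rootA [DecidableEq ι] (i j : ι) : -rootA i j = rootA j i :=
  neg_sub _ _

lemma rootA_add_rootA [DecidableEq ι] (i j k : ι) : rootA i j + rootA j k = rootA i k :=
  sub_add_sub_cancel _ _ _

variable [Fintype ι]

variable (ι) in
/-- The root lattice of type `A` with coordinates indexed by `ι`: the integer vectors whose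
coordinates sum to zero. It contains the rows of every Laplacian
with vertex set `ι`. -/
def rootLatticeA : Submodule ℤ (ι → ℤ) :=
  LinearMap.ker (∑ i, LinearMap.proj i : (ι → ℤ) →ₗ[ℤ] ℤ)

lemma mem_rootLatticeA {x : ι → ℤ} : x ∈ rootLatticeA ι ↔ ∑ i, x i = 0 := by
  simp [rootLatticeA]

lemma finrank_rootLatticeA_add_one [Nonempty ι] :
    Module.finrank ℤ (rootLatticeA ι) + 1 = Fintype.card ι := by
  classical
  have hsurj : Function.Surjective (∑ i, LinearMap.proj i : (ι → ℤ) →ₗ[ℤ] ℤ) := fun z =>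
    ⟨Pi.single (Classical.arbitrary ι) z, by simp⟩
  have h := Submodule.finrank_quotient_add_finrank (rootLatticeA ι)
  rw [rootLatticeA, (LinearMap.quotKerEquivOfSurjective _ hsurj).finrank_eq, Module.finrank_self,
    Module.finrank_fintype_fun_eq_card, add_comm] at h
  exact h

variable [DecidableEq ι]

lemma rootA_mem_rootLatticeA (i j : ι) : rootA i j ∈ rootLatticeA ι := by
  simp [mem_rootLatticeA, rootA]

lemma sum_smul_rootA_apply (a : ι → ℤ) {j k : ι} (h : k ≠ j) :
    (∑ i, a i • rootA i j) k = a k := by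
  simp [rootA_apply, h]

lemma sum_smul_rootA {x : ι → ℤ} (hx : x ∈ rootLatticeA ι) (j : ι) :
    ∑ i, x i • rootA i j = x := by
  ext k
  simp [rootA_apply, mul_sub, mem_rootLatticeA.mp hx]

end RootLattice

section Echelon

variable {R : Type*} [CommRing R]

/-- The vectors of `L` whose coordinates before `i` vanish; these submodules form the flag along
which a basis of `L` in echelon form is built. -/
def vanishingBefore {ι : Type*} [Preorder ι] (L : Submodule R (ι → R)) (i : ι) :
    Submodule R (ι → R) :=
  L ⊓ Submodule.pi (Set.Iio i) fun _ => ⊥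

lemma mem_vanishingBefore {ι : Type*} [Preorder ι] {L : Submodule R (ι → R)} {i : ι} {x : ι → R} :
    x ∈ vanishingBefore L i ↔ x ∈ L ∧ ∀ j < i, x j = 0 := by
  simp [vanishingBefore, Submodule.mem_pi]

lemma span_range_eq_of_echelon {n : ℕ} {L : Submodule R (Fin (n + 1) → R)}
    {q : Fin n → Fin (n + 1) → R} (hlast : vanishingBefore L (Fin.last n) = ⊥)
    (hq : ∀ i, q i ∈ vanishingBefore L i.castSucc)
    (hdvd : ∀ i, ∀ x ∈ vanishingBefore L i.castSucc, q i i.castSucc ∣ x i.castSucc) :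
    Submodule.span R (Set.range q) = L := by
  have hle : ∀ i, vanishingBefore L i ≤ Submodule.span R (Set.range q) := by
    intro i
    induction i using Fin.reverseInduction with
    | last => simp only [hlast, bot_le]
    | cast i ih =>
      intro x hx
      obtain ⟨c, hc⟩ := hdvd i x hx
      have hsub : x - c • q i ∈ vanishingBefore L i.succ := by
        have hmem := sub_mem hx (Submodule.smul_mem _ c (hq i))
        rw [mem_vanishingBefore] at hmem ⊢
        refine ⟨hmem.1, fun j hj => ?_⟩
        rcases (Fin.le_castSucc_iff.mpr hj).lt_or_eq with hlt | rfl
        · exact hmem.2 j hlt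
        · simp [hc, mul_comm]
      rw [← sub_add_cancel x (c • q i)]
      exact add_mem (ih hsub) (Submodule.smul_mem _ c (Submodule.subset_span ⟨i, rfl⟩))
  refine le_antisymm (Submodule.span_le.mpr ?_) fun x hx => ?_
  · rintro _ ⟨i, rfl⟩
    exact (mem_vanishingBefore.mp (hq i)).1
  · exact hle 0 (mem_vanishingBefore.mpr ⟨hx, fun j hj => absurd hj (Fin.not_lt_zero j)⟩)

end Echelon

lemma vanishingBefore_last_eq_bot {n : ℕ} {L : Submodule ℤ (Fin (n + 1) → ℤ)}
    (hL : L ≤ rootLatticeA (Fin (n + 1))) : vanishingBefore L (Fin.last n) = ⊥ := by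
  rw [Submodule.eq_bot_iff]
  intro x hx
  obtain ⟨hxL, hx0⟩ := mem_vanishingBefore.mp hx
  have hinit : ∀ i : Fin n, x i.castSucc = 0 := fun i => hx0 _ i.castSucc_lt_last
  have hsum := mem_rootLatticeA.mp (hL hxL)
  rw [Fin.sum_univ_castSucc] at hsum
  simp only [hinit, Finset.sum_const_zero, zero_add] at hsum
  ext i
  exact Fin.lastCases hsum hinit i

lemma exists_nonpos_above {ι : Type*} [Fintype ι] [LinearOrder ι] {L : Submodule ℤ (ι → ℤ)} {d : ℤ}
    (hd : 0 < d) (hdL : ∀ x ∈ rootLatticeA ι, d • x ∈ L) {h : ι → ℤ} (hh : h ∈ L) (p : ι) :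
    ∃ r ∈ L, (∀ k < p, r k = h k) ∧ ∀ k, p < k → r k ≤ 0 := by
  let a : ι → ℤ := fun k => if p < k then |h k| else 0
  let z : ι → ℤ := ∑ j, a j • rootA j p
  have hz : z ∈ rootLatticeA ι :=
    sum_mem fun j _ => Submodule.smul_mem _ _ (rootA_mem_rootLatticeA j p)
  have hzk : ∀ k, k ≠ p → z k = a k := fun k hk => sum_smul_rootA_apply a hk
  refine ⟨h - d • z, L.sub_mem hh (hdL z hz), fun k hk => ?_, fun k hk => ?_⟩
  · simp [hzk k hk.ne, a, hk.not_gt]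
  · have hle : h k ≤ d * |h k| :=
      (le_abs_self _).trans (le_mul_of_one_le_left (abs_nonneg _) hd)
    simpa [hzk k hk.ne', a, hk] using hle

section Hessenberg

variable {n : ℕ}

/-- The rows of a directed graph Laplacian at the vertices `1, …, n`, where vertex `i + 1` has an
edge to `i` and none to the vertices before `i`. Row `i` of `q` belongs to vertex `i.succ`, so
the diagonal of the Laplacian is the superdiagonal of `q`; the row at vertex `0` is left out. -/
structure IsHessenbergLaplacian (q : Matrix (Fin n) (Fin (n + 1)) ℤ) : Prop where
  mem_rootLatticeA : ∀ i, q i ∈ rootLatticeA (Fin (n + 1))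
  nonpos : ∀ i j, j ≠ i.succ → q i j ≤ 0
  neg_castSucc : ∀ i, q i i.castSucc < 0
  eq_zero_of_lt : ∀ i, ∀ j < i.castSucc, q i j = 0

lemma exists_hessenberg_row {L : Submodule ℤ (Fin (n + 1) → ℤ)} {d : ℤ} (hd : 0 < d)
    (hdL : ∀ x ∈ rootLatticeA (Fin (n + 1)), d • x ∈ L) (i : Fin n) :
    ∃ r ∈ vanishingBefore L i.castSucc, r i.castSucc < 0 ∧ (∀ j, i.succ < j → r j ≤ 0) ∧
      ∀ x ∈ vanishingBefore L i.castSucc, r i.castSucc ∣ x i.castSucc := by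
  have hroot : d • rootA i.castSucc i.succ ∈ vanishingBefore L i.castSucc :=
    mem_vanishingBefore.mpr ⟨hdL _ (rootA_mem_rootLatticeA _ _), fun j hj => by
      simp [rootA_apply, hj.ne, (hj.trans i.castSucc_lt_succ).ne]⟩
  obtain ⟨h, hmem, hneg, hdvd⟩ := exists_neg_forall_dvd (LinearMap.proj i.castSucc)
    ⟨_, hroot, by simp [rootA_apply, i.castSucc_lt_succ.ne, hd.ne']⟩
  obtain ⟨hhL, hh0⟩ := mem_vanishingBefore.mp hmem
  obtain ⟨r, hrL, heq, hnonpos⟩ := exists_nonpos_above hd hdL hhL i.succ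
  have hpivot : r i.castSucc = h i.castSucc := heq _ i.castSucc_lt_succ
  refine ⟨r, mem_vanishingBefore.mpr ⟨hrL, fun j hj => ?_⟩, hpivot ▸ hneg, hnonpos, hpivot ▸ hdvd⟩
  rw [heq j (hj.trans i.castSucc_lt_succ), hh0 j hj]

theorem exists_isHessenbergLaplacian_span_eq {L : Submodule ℤ (Fin (n + 1) → ℤ)}
    (hL : L ≤ rootLatticeA (Fin (n + 1))) {d : ℤ} (hd : 0 < d)
    (hdL : ∀ x ∈ rootLatticeA (Fin (n + 1)), d • x ∈ L) :
    ∃ q : Matrix (Fin n) (Fin (n + 1)) ℤ,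
      IsHessenbergLaplacian q ∧ Submodule.span ℤ (Set.range q) = L := by
  choose q hmem hneg hnonpos hdvd using exists_hessenberg_row hd hdL
  have hzero : ∀ i, ∀ j < i.castSucc, q i j = 0 := fun i => (mem_vanishingBefore.mp (hmem i)).2
  refine ⟨q, ⟨fun i => hL (mem_vanishingBefore.mp (hmem i)).1, fun i j hj => ?_, hneg, hzero⟩,
    span_range_eq_of_echelon (vanishingBefore_last_eq_bot hL) hmem hdvd⟩
  rcases hj.lt_or_gt with hlt | hgt
  · rcases (Fin.le_castSucc_iff.mpr hlt).lt_or_eq with hlt' | rfl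
    · exact (hzero i j hlt').le
    · exact (hneg i).le
  · exact hnonpos i j hgt

namespace IsHessenbergLaplacian

variable {q : Matrix (Fin n) (Fin (n + 1)) ℤ}

lemma rootA_succ_castSucc_mem (hq : IsHessenbergLaplacian q)
    {S : AddSubmonoid (Fin (n + 1) → ℤ)} (hS : ∀ k : ℕ, 0 < k → ∀ x, k • x ∈ S → x ∈ S)
    (hqS : ∀ i, q i ∈ S) {i : Fin n}
    (hroot : ∀ j, i.succ < j → rootA j i.succ ∈ S) :
    rootA i.succ i.castSucc ∈ S := by
  have hterm : ∀ j ∈ Finset.univ.erase i.castSucc, (-q i j) • rootA j i.succ ∈ S := by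
    intro j hj
    rcases lt_trichotomy j i.succ with hlt | rfl | hgt
    · have hj' : j < i.castSucc :=
        (Fin.le_castSucc_iff.mpr hlt).lt_of_ne (Finset.ne_of_mem_erase hj)
      simp [hq.eq_zero_of_lt i j hj']
    · simp [rootA_self]
    · exact zsmul_mem_of_nonneg (hroot j hgt) (neg_nonneg.mpr (hq.nonpos i j hgt.ne'))
  have hrow : (-q i i.castSucc) • rootA i.succ i.castSucc =
      q i + ∑ j ∈ Finset.univ.erase i.castSucc, (-q i j) • rootA j i.succ := by
    have hexpand := sum_smul_rootA (hq.mem_rootLatticeA i) i.succ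
    rw [← Finset.add_sum_erase _ _ (Finset.mem_univ i.castSucc)] at hexpand
    simp only [neg_smul, Finset.sum_neg_distrib]
    rw [← sub_eq_add_neg, ← smul_neg, neg_rootA]
    exact eq_sub_of_add_eq hexpand
  have hmem : (-q i i.castSucc) • rootA i.succ i.castSucc ∈ S :=
    hrow ▸ add_mem (hqS i) (sum_mem hterm)
  have hpos : 0 < -q i i.castSucc := neg_pos.mpr (hq.neg_castSucc i)
  lift -q i i.castSucc to ℕ using hpos.le with m
  rw [natCast_zsmul] at hmem
  exact hS m (by exact_mod_cast hpos) _ hmem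

lemma rootA_mem_of_lt (hq : IsHessenbergLaplacian q)
    {S : AddSubmonoid (Fin (n + 1) → ℤ)} (hS : ∀ k : ℕ, 0 < k → ∀ x, k • x ∈ S → x ∈ S)
    (hqS : ∀ i, q i ∈ S) {i j : Fin (n + 1)} (hij : i < j) : rootA j i ∈ S := by
  induction i using Fin.reverseInduction generalizing j with
  | last => exact absurd hij (Fin.le_last j).not_gt
  | cast i ih =>
    have hstep := hq.rootA_succ_castSucc_mem hS hqS fun j hj => ih hj
    rcases (Fin.castSucc_lt_iff_succ_le.mp hij).eq_or_lt with rfl | hlt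
    · exact hstep
    · exact rootA_add_rootA j i.succ i.castSucc ▸ add_mem (ih hlt) hstep

lemma pos_of_vecMul_pos (hq : IsHessenbergLaplacian q) {c : Fin n → ℤ} (hc : ∀ i, 0 ≤ c i)
    {j : Fin n} (hj : 0 < (c ᵥ* q) j.succ) : 0 < c j := by
  rw [vecMul, dotProduct] at hj
  refine (hc j).lt_of_ne fun hzero => hj.not_ge (Finset.sum_nonpos fun i _ => ?_)
  rcases eq_or_ne i j with rfl | hij
  · simp [← hzero]
  · exact mul_nonpos_of_nonneg_of_nonpos (hc i)
      (hq.nonpos i j.succ fun h => hij (Fin.succ_injective n h).symm)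

theorem exists_pos_vecMul_pos (hq : IsHessenbergLaplacian q) :
    ∃ c : Fin n → ℤ, (∀ i, 0 < c i) ∧ ∀ j : Fin n, 0 < (c ᵥ* q) j.succ := by
  have hroot : ∀ j : Fin n,
      rootA j.succ 0 ∈ divisionClosure (AddSubmonoid.closure (Set.range q)) := fun j =>
    hq.rootA_mem_of_lt (fun _ hk _ => mem_divisionClosure_of_nsmul_mem hk)
      (fun i => le_divisionClosure _ (AddSubmonoid.subset_closure (Set.mem_range_self i)))
      j.succ_pos
  obtain ⟨d, hd, hmem⟩ :=
    mem_divisionClosure.mp (sum_mem fun j (_ : j ∈ Finset.univ) => hroot j)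
  obtain ⟨c, hc⟩ := AddSubmonoid.exists_of_mem_closure_range _ _ hmem
  have hcomb : (fun i => (c i : ℤ)) ᵥ* q = d • ∑ j : Fin n, rootA j.succ 0 := by
    simp only [hc, vecMul_eq_sum, natCast_zsmul]
  have hpos : ∀ j : Fin n, 0 < ((fun i => (c i : ℤ)) ᵥ* q) j.succ := fun j => by
    simpa [hcomb, rootA_apply] using hd
  exact ⟨_, fun j => hq.pos_of_vecMul_pos (fun i => (c i).cast_nonneg) (hpos j), hpos⟩

end IsHessenbergLaplacian

end Hessenberg

section Balance

variable {R κ : Type*} [CommRing R] {n : ℕ}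

/-- The matrix obtained from `q` by prepending the row `-(c ᵥ* q)`, which makes `(1, c)` a left
null vector. -/
def balance (c : Fin n → R) (q : Matrix (Fin n) κ R) : Matrix (Fin (n + 1)) κ R :=
  Matrix.of (vecCons (-(c ᵥ* q)) q.row)

lemma vecCons_one_vecMul_balance (c : Fin n → R) (q : Matrix (Fin n) κ R) :
    vecCons 1 c ᵥ* balance c q = 0 := by
  rw [balance, cons_vecMul_cons, one_smul]
  exact neg_add_cancel (c ᵥ* q)

lemma vecMul_mem_span_range (c : Fin n → R) (q : Matrix (Fin n) κ R) :
    c ᵥ* q ∈ Submodule.span R (Set.range q) :=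
  range_vecMulLinear q ▸ LinearMap.mem_range_self q.vecMulLinear c

lemma span_range_balance (c : Fin n → R) (q : Matrix (Fin n) κ R) :
    Submodule.span R (Set.range (balance c q)) = Submodule.span R (Set.range q) := by
  have hrange : Set.range (balance c q) = insert (-(c ᵥ* q)) (Set.range q) :=
    Fin.range_cons _ _
  rw [hrange]
  exact Submodule.span_insert_eq_span (neg_mem (vecMul_mem_span_range c q))

end Balance

lemma IsHessenbergLaplacian.balance_nonpos {n : ℕ} {q : Matrix (Fin n) (Fin (n + 1)) ℤ}
    (hq : IsHessenbergLaplacian q) {c : Fin n → ℤ} (hc : ∀ j : Fin n, 0 < (c ᵥ* q) j.succ)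
    {i j : Fin (n + 1)} (hij : i ≠ j) : balance c q i j ≤ 0 := by
  cases i using Fin.cases with
  | zero =>
    obtain ⟨j, rfl⟩ := Fin.exists_succ_eq.mpr hij.symm
    exact neg_nonpos.mpr (hc j).le
  | succ i => exact hq.nonpos i j hij.symm

section Laplacian

variable {n : ℕ}

lemma lap_apply_of_ne (A : Matrix (Fin (n + 1)) (Fin (n + 1)) ℕ) {i j : Fin (n + 1)} (h : i ≠ j) :
    lap A i j = -A i j := by
  simp [lap, h]

lemma pos_iff_lap_neg (A : Matrix (Fin (n + 1)) (Fin (n + 1)) ℕ) {i j : Fin (n + 1)} (h : i ≠ j) :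
    0 < A i j ↔ lap A i j < 0 := by
  simp [lap_apply_of_ne A h]

lemma exists_lap_eq {Q : Matrix (Fin (n + 1)) (Fin (n + 1)) ℤ}
    (hsum : ∀ i, Q i ∈ rootLatticeA (Fin (n + 1))) (hoff : ∀ i j, i ≠ j → Q i j ≤ 0) :
    ∃ A : Matrix (Fin (n + 1)) (Fin (n + 1)) ℕ, (∀ i, A i i = 0) ∧ lap A = Q := by
  let A : Matrix (Fin (n + 1)) (Fin (n + 1)) ℕ := fun i j => if i = j then 0 else (-Q i j).toNat
  have hA : ∀ i j, (A i j : ℤ) = (if i = j then Q i i else 0) - Q i j := by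
    intro i j
    rcases eq_or_ne i j with rfl | h
    · simp [A]
    · simp [A, h, hoff i j h]
  refine ⟨A, fun i => by simp [A], ?_⟩
  ext i j
  rcases eq_or_ne i j with rfl | h
  · simp [lap, hA, mem_rootLatticeA.mp (hsum i)]
  · simp [lap_apply_of_ne A h, hA, h]

lemma stronglyConnected_of_path_of_star {A : Matrix (Fin (n + 1)) (Fin (n + 1)) ℕ}
    (hpath : ∀ i : Fin n, 0 < A i.succ i.castSucc) (hstar : ∀ j : Fin n, 0 < A 0 j.succ) :
    StronglyConnected A := by
  have hto : ∀ i, Relation.ReflTransGen (fun a b => 0 < A a b) i 0 := by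
    intro i
    induction i using Fin.induction with
    | zero => exact .refl
    | succ i ih => exact .head (hpath i) ih
  have hfrom : ∀ j, Relation.ReflTransGen (fun a b => 0 < A a b) 0 j :=
    Fin.cases .refl fun j => .single (hstar j)
  intro i j hij
  have hreach := Relation.reflTransGen_iff_eq_or_transGen.mp ((hto i).trans (hfrom j))
  exact hreach.resolve_left hij.symm

end Laplacian

theorem stmt4 (n : ℕ) (hn : 1 ≤ n)
    (L : Submodule ℤ (Fin (n+1) → ℤ))
    (hLsub : ∀ x ∈ L, ∑ i, x i = 0)
    (hrank : Module.finrank ℤ L = n) :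
    ∃ A : Matrix (Fin (n+1)) (Fin (n+1)) ℕ,
      (∀ i, A i i = 0) ∧ StronglyConnected A ∧
      ∃ sig : Fin (n+1) → ℤ, (∀ i, 0 < sig i) ∧
        Matrix.vecMul sig (lap A) = 0 ∧
        sig 0 = 1 ∧
        Finset.univ.gcd sig = 1 ∧
        Submodule.span ℤ (Set.range (fun i => lap A i)) = L := by
  have hL : L ≤ rootLatticeA (Fin (n + 1)) := fun x hx => mem_rootLatticeA.mpr (hLsub x hx)
  have hfinrank : Module.finrank ℤ L = Module.finrank ℤ (rootLatticeA (Fin (n + 1))) := by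
    have := finrank_rootLatticeA_add_one (ι := Fin (n + 1))
    rw [Fintype.card_fin] at this
    omega
  obtain ⟨d, hd, hdL⟩ := exists_pos_smul_mem_of_finrank_eq hL hfinrank
  obtain ⟨q, hq, hspan⟩ := exists_isHessenbergLaplacian_span_eq hL hd hdL
  obtain ⟨c, hc, hpos⟩ := hq.exists_pos_vecMul_pos
  have hspan' : Submodule.span ℤ (Set.range (balance c q)) = L :=
    (span_range_balance c q).trans hspan
  obtain ⟨A, hdiag, hlap⟩ := exists_lap_eq
    (fun i => hL (hspan' ▸ Submodule.subset_span ⟨i, rfl⟩)) fun _ _ => hq.balance_nonpos hpos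
  refine ⟨A, hdiag, stronglyConnected_of_path_of_star (fun i => ?_) fun j => ?_, vecCons 1 c,
    Fin.cases one_pos hc, hlap ▸ vecCons_one_vecMul_balance c q, rfl, ?_, hlap ▸ hspan'⟩
  · rw [pos_iff_lap_neg A i.castSucc_lt_succ.ne', hlap]
    exact hq.neg_castSucc i
  · rw [pos_iff_lap_neg A j.succ_ne_zero.symm, hlap]
    exact neg_neg_of_pos (hpos j)
  · simp [Fin.univ_succ]
end

section
/- Let n ≥ 1, let A : Matrix (Fin (n+1)) (Fin (n+1)) ℕ with zero diagonal be the adjacency matrix of a strongly connected directed multigraph with Laplacian Q = D − A, and let Σ : Fin (n+1) → ℤ be a strictly positive vector with Matrix.vecMul Σ Q = 0 whose entries have gcd 1. Let C : Fin (n+1) → ℤ satisfy C i ≥ 0 for all i ≠ 0. Then there is no infinite sequence f : ℕ → (Fin (n+1) → ℤ) such that for every m : (a) f m ≠ 0; (b) 0 ≤ f m i ≤ Σ i for all i; (c) f m 0 = 0; and (d) for every i ≠ 0, C i − (Matrix.vecMul (∑_{j ≤ m} f j) Q) i ≥ 0. In other words, every sequence of firings satisfying these conditions is finite. -/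
open Matrix

/-!
Let `x ≥ 0` be the total of the firings so far, let `q` be the vertex that never fires, and let `Q`
be the Laplacian. Staying out of debt off `q` bounds each entry of `xᵀQ` from above: by the chips of
`C` off `q`, and by `0` at `q`, which only receives chips. The entries of `xᵀQ` sum to `0`, so they
are bounded below as well: no vertex can accumulate arbitrarily many chips. Hence if `x i` is
bounded and there is an edge from `j` to `i`, then `x j` is bounded, since each firing of `j` sends
a chip to `i`. Propagating backwards from `x q = 0` along paths to `q` leaves finitely many
candidates for `x`, whereas the partial sums of nonzero nonnegative firings are pairwise distinct.
-/

section Laplacian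

variable {V : Type*} [Fintype V] {A : Matrix V V ℕ} {x b : V → ℤ} {i j q : V}

theorem mul_adjacency_le_sum (A : Matrix V V ℕ) (hx : 0 ≤ x) (i j : V) :
    x j * (A j i : ℤ) ≤ ∑ k, x k * (A k i : ℤ) :=
  Finset.single_le_sum (f := fun k => x k * (A k i : ℤ))
    (fun k _ => mul_nonneg (hx k) (Int.natCast_nonneg _)) (Finset.mem_univ j)

variable [DecidableEq V]

/-- The Laplacian of a directed multigraph on an arbitrary finite vertex set, with out-degrees on
the diagonal. It extends `lap` beyond the vertex sets `Fin (n + 1)`. -/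
def digraphLaplacian (A : Matrix V V ℕ) : Matrix V V ℤ :=
  diagonal (fun i => ∑ j, (A i j : ℤ)) - A.map (fun a => (a : ℤ))

theorem vecMul_digraphLaplacian_apply (A : Matrix V V ℕ) (x : V → ℤ) (i : V) :
    (x ᵥ* digraphLaplacian A) i = x i * ∑ j, (A i j : ℤ) - ∑ j, x j * (A j i : ℤ) := by
  rw [digraphLaplacian, vecMul_sub, Pi.sub_apply, vecMul_diagonal]
  rfl

theorem sum_vecMul_digraphLaplacian (A : Matrix V V ℕ) (x : V → ℤ) :
    ∑ i, (x ᵥ* digraphLaplacian A) i = 0 := by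
  simp only [vecMul_digraphLaplacian_apply, Finset.sum_sub_distrib, Finset.mul_sum]
  exact sub_eq_zero.mpr Finset.sum_comm

theorem sub_sum_le_vecMul_digraphLaplacian (hb : x ᵥ* digraphLaplacian A ≤ b) (i : V) :
    b i - ∑ k, b k ≤ (x ᵥ* digraphLaplacian A) i := by
  have slack_le : b i - (x ᵥ* digraphLaplacian A) i ≤ ∑ k, (b k - (x ᵥ* digraphLaplacian A) k) :=
    Finset.single_le_sum (f := fun k => b k - (x ᵥ* digraphLaplacian A) k)
      (fun k _ => sub_nonneg.mpr (hb k)) (Finset.mem_univ i)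
  rw [Finset.sum_sub_distrib, sum_vecMul_digraphLaplacian] at slack_le
  linarith

theorem firing_le_of_adj (hx : 0 ≤ x) (hb : x ᵥ* digraphLaplacian A ≤ b) (hA : 0 < A j i) :
    x j ≤ x i * ∑ k, (A i k : ℤ) + (∑ k, b k - b i) :=
  calc
    x j ≤ x j * (A j i : ℤ) := le_mul_of_one_le_right (hx j) (by exact_mod_cast hA)
    _ ≤ ∑ k, x k * (A k i : ℤ) := mul_adjacency_le_sum A hx i j
    _ = x i * ∑ k, (A i k : ℤ) - (x ᵥ* digraphLaplacian A) i := by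
      rw [vecMul_digraphLaplacian_apply, sub_sub_cancel]
    _ ≤ x i * ∑ k, (A i k : ℤ) + (∑ k, b k - b i) := by
      linarith [sub_sum_le_vecMul_digraphLaplacian hb i]

theorem vecMul_digraphLaplacian_apply_nonpos (A : Matrix V V ℕ) (hx : 0 ≤ x) (hq : x q = 0) :
    (x ᵥ* digraphLaplacian A) q ≤ 0 := by
  rw [vecMul_digraphLaplacian_apply, hq, zero_mul, zero_sub, neg_nonpos]
  exact Finset.sum_nonneg fun k _ => mul_nonneg (hx k) (Int.natCast_nonneg _)

variable {S : Set (V → ℤ)}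

theorem exists_firing_le_of_adj (hS : ∀ x ∈ S, 0 ≤ x ∧ x ᵥ* digraphLaplacian A ≤ b)
    (hA : 0 < A j i) (hi : ∃ B, ∀ x ∈ S, x i ≤ B) : ∃ B, ∀ x ∈ S, x j ≤ B := by
  obtain ⟨B, hB⟩ := hi
  refine ⟨B * ∑ k, (A i k : ℤ) + (∑ k, b k - b i), fun x hx => ?_⟩
  obtain ⟨hx_nonneg, hx_le⟩ := hS x hx
  calc
    x j ≤ x i * ∑ k, (A i k : ℤ) + (∑ k, b k - b i) := firing_le_of_adj hx_nonneg hx_le hA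
    _ ≤ B * ∑ k, (A i k : ℤ) + (∑ k, b k - b i) := by
      gcongr
      exact hB x hx

theorem exists_firing_le_of_reflTransGen (hS : ∀ x ∈ S, 0 ≤ x ∧ x ᵥ* digraphLaplacian A ≤ b)
    (hpath : Relation.ReflTransGen (fun k l => 0 < A k l) j i)
    (hi : ∃ B, ∀ x ∈ S, x i ≤ B) : ∃ B, ∀ x ∈ S, x j ≤ B := by
  induction hpath using Relation.ReflTransGen.head_induction_on with
  | refl => exact hi
  | head hA _ ih => exact exists_firing_le_of_adj hS hA ih

theorem finite_of_vecMul_digraphLaplacian_le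
    (hreach : ∀ i, Relation.ReflTransGen (fun k l => 0 < A k l) i q)
    (hS : ∀ x ∈ S, 0 ≤ x ∧ x ᵥ* digraphLaplacian A ≤ b) (hq : ∃ B, ∀ x ∈ S, x q ≤ B) :
    S.Finite := by
  choose B hB using fun i => exists_firing_le_of_reflTransGen hS (hreach i) hq
  exact (Set.finite_Icc 0 B).subset fun x hx => ⟨(hS x hx).1, fun i => hB i x hx⟩

theorem finite_setOf_debtFree_firing
    (hreach : ∀ i, Relation.ReflTransGen (fun k l => 0 < A k l) i q) (C : V → ℤ) :
    {x : V → ℤ | 0 ≤ x ∧ x q = 0 ∧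
      ∀ i, i ≠ q → 0 ≤ C i - (x ᵥ* digraphLaplacian A) i}.Finite := by
  refine finite_of_vecMul_digraphLaplacian_le (b := Function.update C q 0) hreach ?_
    ⟨0, fun x hx => hx.2.1.le⟩
  rintro x ⟨hx, hq, hdebt⟩
  exact ⟨hx, le_update_iff.mpr
    ⟨vecMul_digraphLaplacian_apply_nonpos A hx hq, fun i hi => sub_nonneg.mp (hdebt i hi)⟩⟩

end Laplacian

theorem strictMono_sum_range_succ {M : Type*} [AddCommMonoid M] [Preorder M]
    [AddLeftStrictMono M] {f : ℕ → M} (hf : ∀ m, 0 < f m) :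
    StrictMono fun m => ∑ j ∈ Finset.range (m + 1), f j :=
  strictMono_nat_of_lt_succ fun m => by
    rw [Finset.sum_range_succ _ (m + 1)]
    exact lt_add_of_pos_right _ (hf (m + 1))

theorem stmt5_general {V : Type*} [Fintype V] [DecidableEq V] {A : Matrix V V ℕ} {q : V}
    (hreach : ∀ i, Relation.ReflTransGen (fun k l => 0 < A k l) i q) (C : V → ℤ) :
    ¬ ∃ f : ℕ → V → ℤ, ∀ m : ℕ,
        f m ≠ 0 ∧ 0 ≤ f m ∧ f m q = 0 ∧
        ∀ i, i ≠ q →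
          0 ≤ C i - ((∑ j ∈ Finset.range (m + 1), f j) ᵥ* digraphLaplacian A) i := by
  rintro ⟨f, hf⟩
  have sum_strictMono : StrictMono fun m => ∑ j ∈ Finset.range (m + 1), f j :=
    strictMono_sum_range_succ fun m => (hf m).2.1.lt_of_ne' (hf m).1
  refine Set.infinite_of_injective_forall_mem sum_strictMono.injective (fun m => ?_)
    (finite_setOf_debtFree_firing hreach C)
  have sum_apply_eq_zero : (∑ j ∈ Finset.range (m + 1), f j) q = 0 := by
    rw [Finset.sum_apply]
    exact Finset.sum_eq_zero fun j _ => (hf j).2.2.1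
  exact ⟨Finset.sum_nonneg fun j _ => (hf j).2.1, sum_apply_eq_zero, (hf m).2.2.2⟩

theorem StronglyConnected.reflTransGen {n : ℕ} {A : Matrix (Fin (n + 1)) (Fin (n + 1)) ℕ}
    (hA : StronglyConnected A) (i j : Fin (n + 1)) :
    Relation.ReflTransGen (fun k l => 0 < A k l) i j := by
  obtain rfl | hij := eq_or_ne i j
  · exact .refl
  · exact (hA i j hij).to_reflTransGen

theorem lap_eq_digraphLaplacian {n : ℕ} (A : Matrix (Fin (n + 1)) (Fin (n + 1)) ℕ) :
    lap A = digraphLaplacian A :=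
  rfl

theorem stmt5 (n : ℕ) (hn : 1 ≤ n) (A : Matrix (Fin (n+1)) (Fin (n+1)) ℕ)
    (hdiag : ∀ i, A i i = 0) (hsc : StronglyConnected A)
    (sig : Fin (n+1) → ℤ) (hpos : ∀ i, 0 < sig i)
    (hker : Matrix.vecMul sig (lap A) = 0)
    (hgcd : Finset.univ.gcd sig = 1)
    (C : Fin (n+1) → ℤ) (hC : ∀ i, i ≠ 0 → 0 ≤ C i) :
    ¬ ∃ f : ℕ → (Fin (n+1) → ℤ), ∀ m : ℕ,
        f m ≠ 0 ∧
        (∀ i, 0 ≤ f m i ∧ f m i ≤ sig i) ∧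
        f m 0 = 0 ∧
        (∀ i, i ≠ 0 →
          0 ≤ C i - Matrix.vecMul (∑ j ∈ Finset.range (m+1), f j) (lap A) i) := by
  rintro ⟨f, hf⟩
  simp only [lap_eq_digraphLaplacian] at hf
  exact stmt5_general (fun i => hsc.reflTransGen i 0) C
    ⟨f, fun m => (hf m).imp_right <| And.imp_left fun hbound i => (hbound i).1⟩
end

section
/- Let K be a field, n ≥ 1, let A : Matrix (Fin (n+1)) (Fin (n+1)) ℕ with zero diagonal be the adjacency matrix of a strongly connected directed multigraph with Laplacian Q = D − A, and let Σ : Fin (n+1) → ℤ be a strictly positive vector with Matrix.vecMul Σ Q = 0, gcd of entries 1, and Σ 0 = 1. Let L be the ℤ-span of the rows of Q. Then the lattice ideal I_L in K[x_0,…,x_n] is equal to the ideal generated by the binomials x^{u⁺} − x^{u⁻}, where u = Matrix.vecMul x Q ranges over all vectors obtained from x : Fin (n+1) → ℤ with 0 ≤ x i ≤ Σ i for all i. -/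
open Matrix MvPolynomial

/-- The lattice ideal of a set `L ⊆ ℤ^{n+1}`: the ideal of `K[x_0,…,x_n]` generated by
all binomials `x^u - x^v` with `u, v ∈ ℕ^{n+1}` and `u - v ∈ L`. -/
noncomputable def latticeIdeal (K : Type*) [Field K] (n : ℕ)
    (L : Set (Fin (n+1) → ℤ)) : Ideal (MvPolynomial (Fin (n+1)) K) :=
  Ideal.span {p | ∃ u v : Fin (n+1) → ℕ,
    (fun i => (u i : ℤ) - (v i : ℤ)) ∈ L ∧
    p = (∏ i, X i ^ u i) - (∏ i, X i ^ v i)}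

/-!
Write `s` for the vector `Σ` and `a` for the family of variables. A lattice vector is `y ᵥ* Q` for
an integer vector `y`, and since adding multiples of `s` to `y` leaves `y ᵥ* Q` unchanged, we may
assume `0 ≤ y ≤ k • s` for some `k`. In chip-firing terms, a binomial `a ^ u - a ^ v` with
`u - v = y ᵥ* Q` asks to move from `u` to `v` by firing `y`. Fire first the top layer
`x = (y - (k - 1) • s)⁺`, which lies between `0` and `s`. As the off-diagonal entries of `Q` are
nonpositive, `x ᵥ* Q ≤ ((y - (k - 1) • s) ᵥ* Q)⁺ = (u - v)⁺ ≤ u`, so this move is legal and reduces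
`a ^ u` modulo the binomial of `x ᵥ* Q`; the rest of `y` lies between `0` and `(k - 1) • s`, and
induction on `k` concludes.
-/

section OrderedGroup

theorem posPart_sub_nsmul_mem_Icc {M : Type*} [Lattice M] [AddCommGroup M] [AddLeftMono M]
    {s y : M} {k : ℕ} (hs : 0 ≤ s) (hy : y ≤ (k + 1) • s) : (y - k • s)⁺ ∈ Set.Icc 0 s :=
  ⟨posPart_nonneg _, sup_le (sub_le_iff_le_add'.2 (by rwa [← succ_nsmul])) hs⟩

theorem sub_posPart_sub_mem_Icc {M : Type*} [Lattice M] [AddCommGroup M] [AddLeftMono M]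
    {b y : M} (hb : 0 ≤ b) (hy : 0 ≤ y) : y - (y - b)⁺ ∈ Set.Icc 0 b := by
  rw [← inf_eq_sub_posPart_sub]
  exact ⟨le_inf hy hb, inf_le_right⟩

theorem exists_pi_le_nsmul {ι M : Type*} [Finite ι] [AddCommMonoid M] [PartialOrder M]
    [IsOrderedAddMonoid M] [Archimedean M] {s : ι → M} (hs : ∀ i, 0 < s i) (y : ι → M) :
    ∃ k : ℕ, y ≤ k • s := by
  choose m hm using fun i => Archimedean.arch (y i) (hs i)
  obtain ⟨k, hk⟩ := Finite.exists_le m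
  exact ⟨k, fun i => (hm i).trans (nsmul_le_nsmul_left (hs i).le (hk i))⟩

end OrderedGroup

section VecMul

variable {ι κ R : Type*} [Fintype ι] [Ring R]

theorem vecMul_apply_le_vecMul_apply [PartialOrder R] [IsOrderedRing R] {Q : Matrix ι ι R}
    {x z : ι → R} {i : ι} (hQ : ∀ j, j ≠ i → Q j i ≤ 0) (hzx : z ≤ x) (hi : x i = z i) :
    (x ᵥ* Q) i ≤ (z ᵥ* Q) i := by
  refine Finset.sum_le_sum fun j _ => ?_
  obtain rfl | hj := eq_or_ne j i
  · rw [hi]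
  · exact mul_le_mul_of_nonpos_right (hzx j) (hQ j hj)

theorem posPart_vecMul_le [LinearOrder R] [IsOrderedRing R] {Q : Matrix ι ι R}
    (hQ : Pairwise fun i j => Q i j ≤ 0) (z : ι → R) : z⁺ ᵥ* Q ≤ (z ᵥ* Q)⁺ := by
  intro i
  have hQi : ∀ j, j ≠ i → Q j i ≤ 0 := fun j hj => hQ hj
  obtain hz | hz := le_total (z i) 0
  · calc (z⁺ ᵥ* Q) i ≤ (0 ᵥ* Q) i :=
          vecMul_apply_le_vecMul_apply hQi (posPart_nonneg z) (posPart_eq_zero.2 hz)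
      _ = 0 := by rw [zero_vecMul, Pi.zero_apply]
      _ ≤ (z ᵥ* Q)⁺ i := posPart_nonneg (z ᵥ* Q) i
  · calc (z⁺ ᵥ* Q) i ≤ (z ᵥ* Q) i :=
          vecMul_apply_le_vecMul_apply hQi (le_posPart z) (posPart_eq_self.2 hz)
      _ ≤ (z ᵥ* Q)⁺ i := le_posPart (z ᵥ* Q) i

theorem add_nsmul_vecMul {R : Type*} [Semiring R] {Q : Matrix ι κ R} {s : ι → R} (hs : s ᵥ* Q = 0)
    (y : ι → R) (k : ℕ) : (y + k • s) ᵥ* Q = y ᵥ* Q := by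
  rw [add_vecMul, smul_vecMul, hs, smul_zero, add_zero]

theorem exists_nonneg_le_nsmul_vecMul_eq [PartialOrder R] [IsOrderedRing R] [Archimedean R]
    {Q : Matrix ι κ R} {s : ι → R} (hpos : ∀ i, 0 < s i) (hs : s ᵥ* Q = 0) (y : ι → R) :
    ∃ (k : ℕ) (y' : ι → R), y' ∈ Set.Icc 0 (k • s) ∧ y' ᵥ* Q = y ᵥ* Q := by
  obtain ⟨m, hm⟩ := exists_pi_le_nsmul hpos (-y)
  obtain ⟨k, hk⟩ := exists_pi_le_nsmul hpos (y + m • s)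
  exact ⟨k, y + m • s, ⟨neg_le_iff_add_nonneg'.1 hm, hk⟩, add_nsmul_vecMul hs y m⟩

end VecMul

section LatticeIdeal

variable {ι S : Type*} [Fintype ι] [CommRing S] (a : ι → S)

/-- The binomial `a ^ w⁺ - a ^ w⁻` of an integer vector `w`, in a family `a` of ring elements; the
binomials in the variables are the case `a = MvPolynomial.X`. -/
def signedBinomial (w : ι → ℤ) : S :=
  (∏ i, a i ^ (w i).toNat) - ∏ i, a i ^ (-(w i)).toNat

/-- The lattice ideal of `L`, with an arbitrary family `a` of ring elements in place of the
variables: `latticeIdeal K n L` is the case `a = MvPolynomial.X`. -/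
def latticeIdealOf (L : Set (ι → ℤ)) : Ideal S :=
  Ideal.span {p | ∃ u v : ι → ℕ, (fun i => (u i : ℤ) - v i) ∈ L ∧
    p = (∏ i, a i ^ u i) - ∏ i, a i ^ v i}

theorem signedBinomial_mem_latticeIdealOf {L : Set (ι → ℤ)} {w : ι → ℤ} (hw : w ∈ L) :
    signedBinomial a w ∈ latticeIdealOf a L := by
  refine Ideal.subset_span ⟨_, _, ?_, rfl⟩
  simpa only [Int.toNat_sub_toNat_neg] using hw

theorem prod_pow_sub_prod_pow_eq_mul_signedBinomial (u v : ι → ℕ) :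
    (∏ i, a i ^ u i) - ∏ i, a i ^ v i =
      (∏ i, a i ^ min (u i) (v i)) * signedBinomial a fun i => (u i : ℤ) - v i := by
  have hu (i) : min (u i) (v i) + ((u i : ℤ) - v i).toNat = u i := by omega
  have hv (i) : min (u i) (v i) + (-((u i : ℤ) - v i)).toNat = v i := by omega
  simp only [signedBinomial, mul_sub, ← Finset.prod_mul_distrib, ← pow_add, hu, hv]

variable {a} {Q : Matrix ι ι ℤ} {s : ι → ℤ}

theorem posPart_sub_nsmul_vecMul_le (hQ : Pairwise fun i j => Q i j ≤ 0) (hs : s ᵥ* Q = 0)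
    {u v : ι → ℕ} {y : ι → ℤ} (huv : (fun i => (u i : ℤ) - v i) = y ᵥ* Q) (k : ℕ) (i : ι) :
    ((y - k • s)⁺ ᵥ* Q) i ≤ u i :=
  calc ((y - k • s)⁺ ᵥ* Q) i ≤ ((y - k • s) ᵥ* Q)⁺ i := posPart_vecMul_le hQ _ i
    _ = ((u i : ℤ) - v i)⁺ := by
      rw [← add_nsmul_vecMul hs _ k, sub_add_cancel, ← huv, Pi.posPart_apply]
    _ ≤ u i := sup_le (by omega) (by omega)

theorem prod_pow_sub_prod_pow_mem_of_mem_Icc_nsmul (hQ : Pairwise fun i j => Q i j ≤ 0)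
    (hs₀ : 0 ≤ s) (hs : s ᵥ* Q = 0) {J : Ideal S}
    (hJ : ∀ x ∈ Set.Icc 0 s, signedBinomial a (x ᵥ* Q) ∈ J)
    {k : ℕ} {u v : ι → ℕ} {y : ι → ℤ} (hy : y ∈ Set.Icc 0 (k • s))
    (huv : (fun i => (u i : ℤ) - v i) = y ᵥ* Q) :
    (∏ i, a i ^ u i) - ∏ i, a i ^ v i ∈ J := by
  induction k generalizing u y with
  | zero =>
    obtain rfl : y = 0 := le_antisymm (by simpa only [zero_smul] using hy.2) hy.1
    obtain rfl : u = v := funext fun i => by simpa [sub_eq_zero] using congrFun huv i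
    simp only [sub_self, zero_mem]
  | succ k ih =>
    set x := (y - k • s)⁺
    obtain ⟨u', hu'⟩ : ∃ u' : ι → ℕ, ∀ i, (u' i : ℤ) = u i - (x ᵥ* Q) i :=
      ⟨_, fun i => Int.toNat_of_nonneg
        (sub_nonneg.2 (posPart_sub_nsmul_vecMul_le hQ hs huv k i))⟩
    have fire_top : (∏ i, a i ^ u i) - ∏ i, a i ^ u' i ∈ J := by
      rw [prod_pow_sub_prod_pow_eq_mul_signedBinomial]
      simp only [hu', sub_sub_cancel]
      exact J.mul_mem_left _ (hJ x (posPart_sub_nsmul_mem_Icc hs₀ hy.2))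
    have fire_rest : (∏ i, a i ^ u' i) - ∏ i, a i ^ v i ∈ J := by
      refine ih (sub_posPart_sub_mem_Icc (nsmul_nonneg hs₀ k) hy.1) ?_
      rw [sub_vecMul, ← huv]
      ext i
      rw [hu', Pi.sub_apply, sub_right_comm]
    simpa only [sub_add_sub_cancel] using J.add_mem fire_top fire_rest

end LatticeIdeal

theorem stmt7_general {ι S : Type*} [Fintype ι] [CommRing S] (a : ι → S) {Q : Matrix ι ι ℤ}
    (hQ : Pairwise fun i j => Q i j ≤ 0) {s : ι → ℤ} (hpos : ∀ i, 0 < s i) (hs : s ᵥ* Q = 0) :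
    latticeIdealOf a (Submodule.span ℤ (Set.range Q.row) : Set (ι → ℤ)) =
      Ideal.span {p | ∃ x : ι → ℤ, (∀ i, 0 ≤ x i ∧ x i ≤ s i) ∧
        p = signedBinomial a (x ᵥ* Q)} := by
  rw [← range_vecMulLinear]
  apply le_antisymm <;> apply Ideal.span_le.2
  · rintro _ ⟨u, v, ⟨y, hy : y ᵥ* Q = _⟩, rfl⟩
    obtain ⟨k, y', hy', hyy'⟩ := exists_nonneg_le_nsmul_vecMul_eq hpos hs y
    refine prod_pow_sub_prod_pow_mem_of_mem_Icc_nsmul hQ (fun i => (hpos i).le) hs (fun x hx => ?_)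
      hy' (hyy'.trans hy).symm
    exact Ideal.subset_span ⟨x, fun i => ⟨hx.1 i, hx.2 i⟩, rfl⟩
  · rintro _ ⟨x, -, rfl⟩
    exact signedBinomial_mem_latticeIdealOf a (LinearMap.mem_range_self Q.vecMulLinear x)

theorem lap_pairwise_nonpos {n : ℕ} (A : Matrix (Fin (n + 1)) (Fin (n + 1)) ℕ) :
    Pairwise fun i j => lap A i j ≤ 0 := by
  intro i j hij
  simp [lap, diagonal_apply_ne _ hij]

theorem stmt7 (K : Type*) [Field K] (n : ℕ) (hn : 1 ≤ n)
    (A : Matrix (Fin (n+1)) (Fin (n+1)) ℕ)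
    (hdiag : ∀ i, A i i = 0) (hsc : StronglyConnected A)
    (sig : Fin (n+1) → ℤ) (hpos : ∀ i, 0 < sig i)
    (hker : Matrix.vecMul sig (lap A) = 0)
    (hgcd : Finset.univ.gcd sig = 1)
    (hsig0 : sig 0 = 1) :
    latticeIdeal K n (Submodule.span ℤ (Set.range (fun i => lap A i)) : Set (Fin (n+1) → ℤ))
      = Ideal.span {p : MvPolynomial (Fin (n+1)) K | ∃ x : Fin (n+1) → ℤ,
          (∀ i, 0 ≤ x i ∧ x i ≤ sig i) ∧
          p = (∏ i, X i ^ (Matrix.vecMul x (lap A) i).toNat)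
              - (∏ i, X i ^ (-(Matrix.vecMul x (lap A) i)).toNat)} :=
  stmt7_general X (lap_pairwise_nonpos A) hpos hker
end

section
/- Let n ≥ 1 and let Σ : Fin (n+1) → ℤ be strictly positive with gcd of entries 1. Let C_Σ be the set of real matrices Q : Matrix (Fin (n+1)) (Fin (n+1)) ℝ with all row sums zero, Q i j ≤ 0 for i ≠ j, Matrix.vecMul (fun i => (Σ i : ℝ)) Q = 0, and strongly connected support digraph (edge from i to j iff i ≠ j and Q i j < 0). Then the topological closure of C_Σ in the space of real (n+1)×(n+1) matrices equals the set of all matrices Q with all row sums zero, Q i j ≤ 0 for i ≠ j, and Matrix.vecMul (fun i => (Σ i : ℝ)) Q = 0. -/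
open Matrix

/-- The cone `C_Σ` of Laplacians of real edge-weighted strongly connected directed
graphs with left kernel containing `Σ`. -/
def coneCSig (n : ℕ) (sig : Fin (n+1) → ℤ) : Set (Matrix (Fin (n+1)) (Fin (n+1)) ℝ) :=
  {Q | (∀ i, ∑ j, Q i j = 0) ∧
       (∀ i j, i ≠ j → Q i j ≤ 0) ∧
       Matrix.vecMul (fun i => (sig i : ℝ)) Q = 0 ∧
       (∀ i j, i ≠ j → Relation.TransGen (fun a b => a ≠ b ∧ Q a b < 0) i j)}

/-! Zero row sums, nonpositive off-diagonal entries and `w ᵥ* Q = 0` cut out a closed cone. The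
complete digraph whose arcs into `j` have weight `w j` has its Laplacian in this cone, and adding a
positive multiple of that Laplacian to any element of the cone makes all off-diagonal entries
negative, hence the support strongly connected. Letting the multiple tend to zero shows that the
strongly connected Laplacians are dense in the cone. -/

open Filter Topology

theorem closure_eq_of_forall_add_smul_mem {R E : Type*} [Semiring R] [Preorder R]
    [TopologicalSpace R] [(𝓝[>] (0 : R)).NeBot] [AddCommMonoid E] [Module R E]
    [TopologicalSpace E] [ContinuousAdd E] [ContinuousSMul R E] {s t : Set E} {p : E}
    (hst : s ⊆ t) (ht : IsClosed t) (hp : ∀ x ∈ t, ∀ c : R, 0 < c → x + c • p ∈ s) :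
    closure s = t := by
  refine (closure_minimal hst ht).antisymm fun x hx => ?_
  have hlim : Tendsto (fun c : R => x + c • p) (𝓝[>] 0) (𝓝 x) := by
    have hcont : Continuous fun c : R => x + c • p := by fun_prop
    simpa only [zero_smul, add_zero] using (hcont.tendsto 0).mono_left nhdsWithin_le_nhds
  exact mem_closure_of_tendsto hlim (eventually_mem_nhdsWithin.mono (hp x hx))

/-- Strong connectivity of the support digraph of `Q`, the digraph with an arc from `i` to `j`
whenever `i ≠ j` and `Q i j < 0`. The sign is the one for Laplacians, in which an arc of weight
`a` contributes the off-diagonal entry `-a`. -/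
def HasStronglyConnectedSupport {ι R : Type*} [Zero R] [LT R] (Q : Matrix ι ι R) : Prop :=
  ∀ i j, i ≠ j → Relation.TransGen (fun a b => a ≠ b ∧ Q a b < 0) i j

theorem hasStronglyConnectedSupport_of_forall_neg {ι R : Type*} [Zero R] [LT R]
    {Q : Matrix ι ι R} (hQ : ∀ i j, i ≠ j → Q i j < 0) : HasStronglyConnectedSupport Q :=
  fun i j hij => .single ⟨hij, hQ i j hij⟩

section BalancedLaplacian

variable {ι R : Type*} [Fintype ι] [CommRing R] [PartialOrder R] [IsOrderedRing R]

/-- The pointed cone of Laplacians of weighted digraphs on `ι` whose left kernel contains `w`,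
without any connectivity requirement. -/
def balancedLaplacianCone (w : ι → R) : PointedCone R (Matrix ι ι R) where
  carrier := {Q | (∀ i, ∑ j, Q i j = 0) ∧ (∀ i j, i ≠ j → Q i j ≤ 0) ∧ w ᵥ* Q = 0}
  zero_mem' := ⟨fun _ => Finset.sum_const_zero, fun _ _ _ => le_rfl, vecMul_zero w⟩
  add_mem' := by
    rintro P Q ⟨hP_row, hP_off, hP_ker⟩ ⟨hQ_row, hQ_off, hQ_ker⟩
    refine ⟨fun i => ?_, fun i j hij => add_nonpos (hP_off i j hij) (hQ_off i j hij), ?_⟩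
    · simp only [Matrix.add_apply, Finset.sum_add_distrib, hP_row, hQ_row, add_zero]
    · rw [vecMul_add, hP_ker, hQ_ker, add_zero]
  smul_mem' := by
    rintro ⟨c, hc⟩ Q ⟨h_row, h_off, h_ker⟩
    refine ⟨fun i => ?_, fun i j hij => mul_nonpos_of_nonneg_of_nonpos hc (h_off i j hij), ?_⟩
    · simp only [Nonneg.mk_smul, Matrix.smul_apply, ← Finset.smul_sum, h_row, smul_zero]
    · rw [Nonneg.mk_smul, vecMul_smul, h_ker, smul_zero]

theorem isClosed_balancedLaplacianCone [TopologicalSpace R] [IsTopologicalRing R]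
    [OrderClosedTopology R] (w : ι → R) :
    IsClosed (balancedLaplacianCone w : Set (Matrix ι ι R)) := by
  have h_entry (i j : ι) : Continuous fun Q : Matrix ι ι R => Q i j :=
    continuous_id.matrix_elem i j
  have h_row : IsClosed {Q : Matrix ι ι R | ∀ i, ∑ j, Q i j = 0} := by
    simp only [Set.ofPred_forall]
    exact isClosed_iInter fun i =>
      isClosed_eq (continuous_finsetSum _ fun j _ => h_entry i j) continuous_const
  have h_off : IsClosed {Q : Matrix ι ι R | ∀ i j, i ≠ j → Q i j ≤ 0} := by
    simp only [Set.ofPred_forall]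
    exact isClosed_iInter fun i => isClosed_iInter fun j => isClosed_iInter fun _ =>
      isClosed_le (h_entry i j) continuous_const
  have h_ker : IsClosed {Q : Matrix ι ι R | w ᵥ* Q = 0} :=
    isClosed_eq (continuous_const.matrix_vecMul continuous_id) continuous_const
  exact h_row.inter (h_off.inter h_ker)

end BalancedLaplacian

section CompleteLaplacian

variable {ι R : Type*} [Fintype ι] [DecidableEq ι] [CommRing R]

/-- The Laplacian of the complete digraph on `ι` in which every arc into `j` has weight `w j`;
it serves as the direction in which Laplacians are perturbed to become strongly connected. -/
def completeLaplacian (w : ι → R) : Matrix ι ι R :=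
  (∑ k, w k) • 1 - vecMulVec 1 w

theorem completeLaplacian_apply_of_ne (w : ι → R) {i j : ι} (hij : i ≠ j) :
    completeLaplacian w i j = -w j := by
  simp [completeLaplacian, hij]

theorem sum_completeLaplacian_apply (w : ι → R) (i : ι) : ∑ j, completeLaplacian w i j = 0 := by
  simp [completeLaplacian, one_apply]

theorem vecMul_completeLaplacian (w : ι → R) : w ᵥ* completeLaplacian w = 0 := by
  rw [completeLaplacian, vecMul_sub, vecMul_smul, vecMul_one, vecMul_vecMulVec, dotProduct_one,
    sub_self]

theorem completeLaplacian_mem_balancedLaplacianCone [PartialOrder R] [IsOrderedRing R]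
    {w : ι → R} (hw : 0 ≤ w) : completeLaplacian w ∈ balancedLaplacianCone w := by
  refine ⟨sum_completeLaplacian_apply w, fun i j hij => ?_, vecMul_completeLaplacian w⟩
  rw [completeLaplacian_apply_of_ne w hij]
  exact neg_nonpos.2 (hw j)

theorem hasStronglyConnectedSupport_add_smul_completeLaplacian [PartialOrder R]
    [IsStrictOrderedRing R] {w : ι → R} (hw : ∀ i, 0 < w i) {Q : Matrix ι ι R}
    (hQ : ∀ i j, i ≠ j → Q i j ≤ 0) {c : R} (hc : 0 < c) :
    HasStronglyConnectedSupport (Q + c • completeLaplacian w) := by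
  refine hasStronglyConnectedSupport_of_forall_neg fun i j hij => ?_
  rw [Matrix.add_apply, Matrix.smul_apply, completeLaplacian_apply_of_ne w hij, smul_eq_mul]
  exact add_neg_of_nonpos_of_neg (hQ i j hij) (mul_neg_of_pos_of_neg hc (neg_neg_of_pos (hw j)))

end CompleteLaplacian

theorem stmt14_general {ι 𝕜 : Type*} [Fintype ι] [Field 𝕜] [LinearOrder 𝕜]
    [IsStrictOrderedRing 𝕜] [TopologicalSpace 𝕜] [OrderTopology 𝕜]
    {w : ι → 𝕜} (hw : ∀ i, 0 < w i) :
    closure {Q | Q ∈ balancedLaplacianCone w ∧ HasStronglyConnectedSupport Q}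
      = balancedLaplacianCone w := by
  classical
  refine closure_eq_of_forall_add_smul_mem (R := 𝕜) (p := completeLaplacian w)
    (fun Q hQ => hQ.1) (isClosed_balancedLaplacianCone w) fun Q hQ c hc => ⟨?_, ?_⟩
  · have hP := completeLaplacian_mem_balancedLaplacianCone fun i => (hw i).le
    exact add_mem hQ (PointedCone.smul_mem _ hc.le hP)
  · exact hasStronglyConnectedSupport_add_smul_completeLaplacian hw hQ.2.1 hc

theorem coneCSig_eq (n : ℕ) (sig : Fin (n + 1) → ℤ) :
    coneCSig n sig =
      {Q | Q ∈ balancedLaplacianCone (fun i => (sig i : ℝ)) ∧ HasStronglyConnectedSupport Q} :=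
  Set.ext fun _ =>
    ⟨fun ⟨h_row, h_off, h_ker, h_conn⟩ => ⟨⟨h_row, h_off, h_ker⟩, h_conn⟩,
      fun ⟨⟨h_row, h_off, h_ker⟩, h_conn⟩ => ⟨h_row, h_off, h_ker, h_conn⟩⟩

theorem stmt14 (n : ℕ) (hn : 1 ≤ n)
    (sig : Fin (n+1) → ℤ) (hpos : ∀ i, 0 < sig i)
    (hgcd : Finset.univ.gcd sig = 1) :
    closure (coneCSig n sig)
      = {Q : Matrix (Fin (n+1)) (Fin (n+1)) ℝ |
          (∀ i, ∑ j, Q i j = 0) ∧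
          (∀ i j, i ≠ j → Q i j ≤ 0) ∧
          Matrix.vecMul (fun i => (sig i : ℝ)) Q = 0} := by
  rw [coneCSig_eq]
  exact stmt14_general fun i => Int.cast_pos.2 (hpos i)
end

section
/- Let n ≥ 1, let A : Matrix (Fin (n+1)) (Fin (n+1)) ℕ with zero diagonal be the adjacency matrix of a strongly connected directed multigraph with Laplacian Q = D − A, and let Σ : Fin (n+1) → ℤ be the strictly positive vector with gcd of entries 1 spanning the left kernel of Q (Matrix.vecMul Σ Q = 0). Let L ⊆ ℤ^{n+1} be the ℤ-span of the rows of Q, let π : ℤ^{n+1} → ℤ^n be the projection deleting the coordinate indexed by 0, and let Q̃ : Matrix (Fin n) (Fin n) ℤ be the reduced Laplacian obtained from Q by deleting the row and column indexed by 0. Then π(L) equals the ℤ-span of the rows of Q̃ if and only if Σ 0 = 1. -/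
open Matrix

/-!
If the rows of a square matrix `Q` sum to zero, deleting column `p` loses no information about its
row lattice, so that the deleted row `p` lies in the span of the other deleted rows exactly when the
left kernel of `Q` contains a vector with `p`-th entry `1`. When `Q` is the Laplacian of a digraph
in which every vertex reaches `p`, the maximum principle makes the reduced Laplacian nonsingular, so
a vector of the left kernel is determined by its `p`-th entry. The left kernel is then generated by
any unimodular vector `σ` in it, and contains a vector with `p`-th entry `1` if and only if `σ p` is
a unit.
-/

section DeletedMatrix

variable {R : Type*} [CommRing R] {n : ℕ}

theorem removeNth_vecMul (p : Fin (n + 1)) (x : Fin (n + 1) → R)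
    (M : Matrix (Fin (n + 1)) (Fin (n + 1)) R) :
    p.removeNth (x ᵥ* M) =
      x p • p.removeNth (M p) + p.removeNth x ᵥ* M.submatrix p.succAbove p.succAbove := by
  ext j
  simp [Fin.removeNth, vecMul, dotProduct, Fin.sum_univ_succAbove _ p]

theorem removeNth_mulVec (p : Fin (n + 1)) (M : Matrix (Fin (n + 1)) (Fin (n + 1)) R)
    (x : Fin (n + 1) → R) :
    p.removeNth (M *ᵥ x) =
      x p • p.removeNth (Mᵀ p) + M.submatrix p.succAbove p.succAbove *ᵥ p.removeNth x := by
  rw [← vecMul_transpose, removeNth_vecMul, ← transpose_submatrix, vecMul_transpose]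

theorem eq_zero_of_removeNth_eq_zero_of_sum_eq_zero {p : Fin (n + 1)} {v : Fin (n + 1) → R}
    (hv : p.removeNth v = 0) (hsum : ∑ i, v i = 0) : v = 0 := by
  have hne : ∀ j, v (p.succAbove j) = 0 := congrFun hv
  have hp : v p = 0 := by simpa [Fin.sum_univ_succAbove _ p, hne] using hsum
  exact funext (p.forall_iff_succAbove.2 ⟨hp, hne⟩)

theorem vecMul_eq_zero_iff_removeNth_of_mulVec_one_eq_zero
    {Q : Matrix (Fin (n + 1)) (Fin (n + 1)) R} (hQ : Q *ᵥ 1 = 0) (p : Fin (n + 1))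
    (x : Fin (n + 1) → R) : x ᵥ* Q = 0 ↔ p.removeNth (x ᵥ* Q) = 0 := by
  refine ⟨fun h => by rw [h]; rfl, fun h => eq_zero_of_removeNth_eq_zero_of_sum_eq_zero h ?_⟩
  rw [← dotProduct_one, ← dotProduct_mulVec, hQ, dotProduct_zero]

theorem map_funLeft_span_rows_eq_iff_mem (p : Fin (n + 1))
    (M : Matrix (Fin (n + 1)) (Fin (n + 1)) R) :
    (Submodule.span R (Set.range M.row)).map (LinearMap.funLeft R R p.succAbove) =
        Submodule.span R (Set.range (M.submatrix p.succAbove p.succAbove).row) ↔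
      p.removeNth (M p) ∈
        Submodule.span R (Set.range (M.submatrix p.succAbove p.succAbove).row) := by
  have hrows : LinearMap.funLeft R R p.succAbove '' Set.range M.row =
      insert (p.removeNth (M p)) (Set.range (M.submatrix p.succAbove p.succAbove).row) := by
    rw [← Set.range_comp]
    ext v
    simp only [Set.mem_range, Set.mem_insert_iff, p.exists_iff_succAbove, eq_comm (a := v)]
    rfl
  rw [Submodule.map_span, hrows]
  refine ⟨fun h => h ▸ Submodule.subset_span (Set.mem_insert _ _), Submodule.span_insert_eq_span⟩

theorem removeNth_row_mem_span_iff_exists_vecMul_eq_zero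
    {Q : Matrix (Fin (n + 1)) (Fin (n + 1)) R} (hQ : Q *ᵥ 1 = 0) (p : Fin (n + 1)) :
    p.removeNth (Q p) ∈ Submodule.span R (Set.range (Q.submatrix p.succAbove p.succAbove).row) ↔
      ∃ x : Fin (n + 1) → R, x ᵥ* Q = 0 ∧ x p = 1 := by
  have hspan : Submodule.span R (Set.range (Q.submatrix p.succAbove p.succAbove).row) =
      LinearMap.range (Q.submatrix p.succAbove p.succAbove).vecMulLinear :=
    (range_vecMulLinear _).symm
  simp only [hspan, LinearMap.mem_range, vecMulLinear_apply,
    vecMul_eq_zero_iff_removeNth_of_mulVec_one_eq_zero hQ p, removeNth_vecMul]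
  constructor
  · rintro ⟨c, hc⟩
    refine ⟨p.insertNth 1 (-c), ?_, p.insertNth_apply_same _ _⟩
    rw [Fin.insertNth_apply_same, Fin.removeNth_insertNth, one_smul, neg_vecMul, hc, add_neg_cancel]
  · rintro ⟨x, hx, hxp⟩
    refine ⟨-p.removeNth x, ?_⟩
    rw [hxp, one_smul] at hx
    rw [neg_vecMul, eq_neg_of_add_eq_zero_left hx]

end DeletedMatrix

theorem span_range_eq_top_of_gcd_eq_one {R V : Type*} [CommRing R] [IsBezout R]
    [NormalizedGCDMonoid R] [Fintype V] {f : V → R} (hf : Finset.univ.gcd f = 1) :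
    Ideal.span (Set.range f) = ⊤ := by
  obtain ⟨g, hg⟩ := Finset.univ.gcd_eq_sum_mul f
  refine (Ideal.eq_top_iff_one _).2 (Ideal.mem_span_range_iff_exists_fun.2 ⟨g, ?_⟩)
  simp only [mul_comm (g _), ← hg, hf]

theorem int_isUnit_iff_eq_one_of_pos {u : ℤ} (hu : 0 < u) : IsUnit u ↔ u = 1 := by
  rw [Int.isUnit_iff]
  lia

theorem eq_span_singleton_of_span_range_eq_top {R V : Type*} [CommRing R] [IsDomain R] [Finite V]
    {K : Submodule R (V → R)} {p : V} (hK : ∀ x ∈ K, x p = 0 → x = 0) {σ : V → R} (hσ : σ ∈ K)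
    (hunimod : Ideal.span (Set.range σ) = ⊤) : K = Submodule.span R {σ} := by
  have := Fintype.ofFinite V
  obtain ⟨c, hc⟩ : ∃ c : V → R, ∑ i, c i * σ i = 1 :=
    Ideal.mem_span_range_iff_exists_fun.1 ((Ideal.eq_top_iff_one _).1 hunimod)
  have hσp : σ p ≠ 0 := fun h => by simp [hK σ hσ h] at hc
  have hprop : ∀ x ∈ K, ∀ i, σ p * x i = x p * σ i := fun x hx i =>
    sub_eq_zero.1 <| congrFun (hK (σ p • x - x p • σ)
      (K.sub_mem (K.smul_mem _ hx) (K.smul_mem _ hσ)) (by simp [mul_comm])) i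
  refine le_antisymm (fun x hx => Submodule.mem_span_singleton.2 ⟨∑ i, c i * x i, ?_⟩)
    ((Submodule.span_singleton_le_iff_mem _ _).2 hσ)
  have hbezout : σ p * ∑ i, c i * x i = x p := by
    calc σ p * ∑ i, c i * x i
        = ∑ i, c i * (σ p * x i) := by simp only [Finset.mul_sum, mul_left_comm]
      _ = ∑ i, c i * (x p * σ i) := by simp only [hprop x hx]
      _ = x p * ∑ i, c i * σ i := by simp only [Finset.mul_sum, mul_left_comm]
      _ = x p := by rw [hc, mul_one]
  refine funext fun j => mul_left_cancel₀ hσp ?_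
  rw [Pi.smul_apply, smul_eq_mul, ← mul_assoc, hbezout, hprop x hx]

section WeightedLaplacian

/-- The Laplacian of the weighted digraph in which the edge from `i` to `j` has weight `A i j`:
out-degrees on the diagonal, minus `A`. A loop contributes to both terms and cancels. -/
def weightedLaplacian {R V : Type*} [CommRing R] [Fintype V] [DecidableEq V] (A : Matrix V V R) :
    Matrix V V R :=
  diagonal (fun i => ∑ j, A i j) - A

theorem weightedLaplacian_mulVec_apply {R V : Type*} [CommRing R] [Fintype V] [DecidableEq V]
    (A : Matrix V V R) (x : V → R) (i : V) :
    (weightedLaplacian A *ᵥ x) i = ∑ j, A i j * (x i - x j) := by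
  simp only [weightedLaplacian, sub_mulVec, Pi.sub_apply, mulVec_diagonal, mul_sub,
    Finset.sum_sub_distrib, Finset.sum_mul]
  rfl

theorem weightedLaplacian_mulVec_one {R V : Type*} [CommRing R] [Fintype V] [DecidableEq V]
    (A : Matrix V V R) : weightedLaplacian A *ᵥ 1 = 0 := by
  ext i
  simp [weightedLaplacian_mulVec_apply]

variable {R : Type*} [CommRing R] [LinearOrder R] [IsStrictOrderedRing R]

section MaximumPrinciple

variable {V : Type*} [Fintype V] [DecidableEq V] {A : Matrix V V R} {p : V}

theorem eq_of_isMax_of_weightedLaplacian_mulVec_nonpos (hA : ∀ i j, 0 ≤ A i j) {x : V → R} {i j : V}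
    (hx : (weightedLaplacian A *ᵥ x) i ≤ 0) (hmax : ∀ k, x k ≤ x i) (hij : 0 < A i j) :
    x j = x i := by
  have hnonneg : ∀ k ∈ Finset.univ, 0 ≤ A i k * (x i - x k) := fun k _ =>
    mul_nonneg (hA i k) (sub_nonneg.2 (hmax k))
  rw [weightedLaplacian_mulVec_apply] at hx
  have hterm : A i j * (x i - x j) = 0 :=
    (Finset.sum_eq_zero_iff_of_nonneg hnonneg).1 (hx.antisymm (Finset.sum_nonneg hnonneg)) j
      (Finset.mem_univ j)
  exact (sub_eq_zero.1 ((mul_eq_zero.1 hterm).resolve_left hij.ne')).symm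

theorem le_apply_of_weightedLaplacian_mulVec_nonpos (hA : ∀ i j, 0 ≤ A i j)
    (hp : ∀ i, Relation.ReflTransGen (fun a b => 0 < A a b) i p) {x : V → R}
    (hx : ∀ i ≠ p, (weightedLaplacian A *ᵥ x) i ≤ 0) (i : V) : x i ≤ x p := by
  have : Nonempty V := ⟨p⟩
  obtain ⟨m, hm⟩ := Finite.exists_max x
  suffices h : ∀ k, Relation.ReflTransGen (fun a b => 0 < A a b) k p → x k = x m → x p = x m from
    (hm i).trans_eq (h m (hp m) rfl).symm
  intro k hk
  induction hk using Relation.ReflTransGen.head_induction_on with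
  | refl => exact id
  | @head a b hab _ ih =>
    intro ha
    rcases eq_or_ne a p with rfl | hap
    · exact ha
    · exact ih <| (eq_of_isMax_of_weightedLaplacian_mulVec_nonpos hA (hx a hap)
        (fun k => (hm k).trans_eq ha.symm) hab).trans ha

theorem eq_zero_of_weightedLaplacian_mulVec_eq_zero (hA : ∀ i j, 0 ≤ A i j)
    (hp : ∀ i, Relation.ReflTransGen (fun a b => 0 < A a b) i p) {x : V → R}
    (hx : ∀ i ≠ p, (weightedLaplacian A *ᵥ x) i = 0) (hxp : x p = 0) : x = 0 := by
  have hle := le_apply_of_weightedLaplacian_mulVec_nonpos hA hp fun i hi => (hx i hi).le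
  have hge := le_apply_of_weightedLaplacian_mulVec_nonpos hA hp (x := -x) fun i hi => by
    rw [mulVec_neg, Pi.neg_apply, hx i hi, neg_zero]
  refine funext fun i => le_antisymm ((hle i).trans_eq hxp) (neg_nonpos.1 ((hge i).trans_eq ?_))
  rw [Pi.neg_apply, hxp, neg_zero]

end MaximumPrinciple

variable {n : ℕ} {A : Matrix (Fin (n + 1)) (Fin (n + 1)) R} {p : Fin (n + 1)}

theorem det_reduced_weightedLaplacian_ne_zero (hA : ∀ i j, 0 ≤ A i j)
    (hp : ∀ i, Relation.ReflTransGen (fun a b => 0 < A a b) i p) :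
    ((weightedLaplacian A).submatrix p.succAbove p.succAbove).det ≠ 0 := by
  intro hdet
  obtain ⟨z, hz, hker⟩ := exists_mulVec_eq_zero_iff.2 hdet
  have hdel : p.removeNth (weightedLaplacian A *ᵥ p.insertNth 0 z) = 0 := by
    rw [removeNth_mulVec, Fin.insertNth_apply_same, Fin.removeNth_insertNth, zero_smul, zero_add,
      hker]
  have hext : p.insertNth 0 z = (0 : Fin (n + 1) → R) := by
    refine eq_zero_of_weightedLaplacian_mulVec_eq_zero hA hp (fun i hi => ?_)
      (p.insertNth_apply_same _ _)
    obtain ⟨j, rfl⟩ := Fin.exists_succAbove_eq hi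
    exact congrFun hdel j
  refine hz ?_
  rw [← p.removeNth_insertNth (α := fun _ => R) 0 z, hext]
  rfl

theorem eq_zero_of_vecMul_weightedLaplacian_eq_zero (hA : ∀ i j, 0 ≤ A i j)
    (hp : ∀ i, Relation.ReflTransGen (fun a b => 0 < A a b) i p) {y : Fin (n + 1) → R}
    (hy : y ᵥ* weightedLaplacian A = 0) (hyp : y p = 0) : y = 0 := by
  have hdel : p.removeNth y ᵥ* (weightedLaplacian A).submatrix p.succAbove p.succAbove = 0 := by
    have h := removeNth_vecMul p y (weightedLaplacian A)
    rw [hy, hyp, zero_smul, zero_add] at h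
    exact h.symm
  have hne := eq_zero_of_vecMul_eq_zero (det_reduced_weightedLaplacian_ne_zero hA hp) hdel
  exact funext (p.forall_iff_succAbove.2 ⟨hyp, congrFun hne⟩)

theorem ker_vecMulLinear_weightedLaplacian_eq_span_singleton (hA : ∀ i j, 0 ≤ A i j)
    (hp : ∀ i, Relation.ReflTransGen (fun a b => 0 < A a b) i p) {σ : Fin (n + 1) → R}
    (hσ : σ ᵥ* weightedLaplacian A = 0) (hunimod : Ideal.span (Set.range σ) = ⊤) :
    LinearMap.ker (weightedLaplacian A).vecMulLinear = Submodule.span R {σ} :=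
  eq_span_singleton_of_span_range_eq_top
    (fun _ hx => eq_zero_of_vecMul_weightedLaplacian_eq_zero hA hp hx) hσ hunimod

theorem stmt15_general (hA : ∀ i j, 0 ≤ A i j)
    (hp : ∀ i, Relation.ReflTransGen (fun a b => 0 < A a b) i p) {σ : Fin (n + 1) → R}
    (hσ : σ ᵥ* weightedLaplacian A = 0) (hunimod : Ideal.span (Set.range σ) = ⊤) :
    (Submodule.span R (Set.range (weightedLaplacian A).row)).map
          (LinearMap.funLeft R R p.succAbove) =
        Submodule.span R
          (Set.range ((weightedLaplacian A).submatrix p.succAbove p.succAbove).row) ↔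
      IsUnit (σ p) := by
  have hker : ∀ x, x ᵥ* weightedLaplacian A = 0 ↔ ∃ c : R, c • σ = x := fun x => by
    rw [← Submodule.mem_span_singleton,
      ← ker_vecMulLinear_weightedLaplacian_eq_span_singleton hA hp hσ hunimod]
    rfl
  rw [map_funLeft_span_rows_eq_iff_mem,
    removeNth_row_mem_span_iff_exists_vecMul_eq_zero (weightedLaplacian_mulVec_one A),
    isUnit_iff_exists_inv']
  simp [hker]

end WeightedLaplacian

theorem lap_eq_weightedLaplacian {n : ℕ} (A : Matrix (Fin (n + 1)) (Fin (n + 1)) ℕ) :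
    lap A = weightedLaplacian (A.map Nat.cast) :=
  rfl

theorem StronglyConnected.reflTransGen_map_natCast {n : ℕ}
    {A : Matrix (Fin (n + 1)) (Fin (n + 1)) ℕ} (hA : StronglyConnected A) (i j : Fin (n + 1)) :
    Relation.ReflTransGen (fun a b => 0 < A.map (Nat.cast : ℕ → ℤ) a b) i j := by
  rcases eq_or_ne i j with rfl | hij
  · exact .refl
  · exact Relation.ReflTransGen.mono (fun _ _ => Int.natCast_pos.2) _ _ (hA i j hij).to_reflTransGen

theorem stmt15 (n : ℕ) (hn : 1 ≤ n) (A : Matrix (Fin (n+1)) (Fin (n+1)) ℕ)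
    (hdiag : ∀ i, A i i = 0) (hsc : StronglyConnected A)
    (sig : Fin (n+1) → ℤ) (hpos : ∀ i, 0 < sig i)
    (hker : Matrix.vecMul sig (lap A) = 0)
    (hgcd : Finset.univ.gcd sig = 1) :
    Submodule.map (LinearMap.funLeft ℤ ℤ (Fin.succ : Fin n → Fin (n+1)))
        (Submodule.span ℤ (Set.range (fun i => lap A i)))
      = Submodule.span ℤ
          (Set.range (fun i : Fin n => fun j : Fin n => lap A i.succ j.succ))
    ↔ sig 0 = 1 := by
  rw [lap_eq_weightedLaplacian, ← Fin.succAbove_zero, ← int_isUnit_iff_eq_one_of_pos (hpos 0)]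
  exact stmt15_general (fun i j => Int.natCast_nonneg (A i j)) (hsc.reflTransGen_map_natCast · 0)
    hker (span_range_eq_top_of_gcd_eq_one hgcd)
end
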